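/- For each n ∈ {30, 31, 32}, the word w contains no ψ-kernel repetition for n; that is, w contains no factor v having a kernel period q with (n−1)(|v|+1) ≥ nq − 3. -/

import Mathlib

/-- The four-letter alphabet `A₄ = {1,2,3,4}`; the value `k : Fin 4` represents letter `k+1`. -/
abbrev A4 := Fin 4

/-- The morphism `f` on letters: `f(1)=121, f(2)=123, f(3)=141, f(4)=142`
(letters `1,2,3,4` encoded as `0,1,2,3`). -/
def fm : A4 → List A4
  | 0 => [0, 1, 0]
  | 1 => [0, 1, 2]
  | 2 => [0, 3, 0]
  | 3 => [0, 3, 1]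

/-- The morphism `f` extended to words by concatenation. -/
def fw (u : List A4) : List A4 := u.flatMap fm

/-- The fixed point `w` of `f` starting with the letter `1`: since `|f^k(1)| = 3^k` and each
`f^k(1)` is a prefix of `f^(k+1)(1)`, the `n`-th letter of `w` is the `n`-th letter of
`f^(n+1)(1)`. -/
def w (n : ℕ) : A4 := ((fw^[n + 1]) [0]).getD n 0

/-- The finite word `t` occurs at position `i` in the infinite word `x`. -/
def OccursAt {α : Type*} (t : List α) (x : ℕ → α) (i : ℕ) : Prop :=
  t = (List.range t.length).map fun k => x (i + k)

/-- The finite word `v` is a factor of the infinite word `x`. -/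
def FactorOf {α : Type*} (v : List α) (x : ℕ → α) : Prop :=
  ∃ i, OccursAt v x i

/-- The finite word `v` has period `q ≥ 1`: `v(j) = v(j+q)` whenever `0 ≤ j < |v| - q`. -/
def HasPeriod {α : Type*} (v : List α) (q : ℕ) : Prop :=
  1 ≤ q ∧ ∀ j, j + q < v.length → v[j]? = v[j + q]?

/-- A word lies in `ker ψ` if each letter of `A₄` occurs in it a number of times
divisible by `4`. -/
def InKerPsi (u : List A4) : Prop := ∀ a : A4, 4 ∣ u.count a

/-- `q` is a kernel period of `v`: `1 ≤ q ≤ |v|`, `v` has period `q`, and the prefix of `v`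
of length `q` lies in `ker ψ`. -/
def KernelPeriod (v : List A4) (q : ℕ) : Prop :=
  q ≤ v.length ∧ HasPeriod v q ∧ InKerPsi (v.take q)

/-!
In `w` the positions divisible by `3` carry the letter `1`, and those congruent to `1` modulo `3`
never do. Hence a kernel repetition of period `q` whose length exceeds `q` by `L ≥ 3` has `3 ∣ q`,
and cutting it along the images of letters exhibits it as the image under `f` of a repetition of
period `q / 3` with overlap about `L / 3`. The latter is again a kernel repetition, because the
incidence matrix of `f` has determinant `3` and is therefore invertible modulo `4`. Iterating, a
linear bound `31 L + 36 < q` for all kernel repetitions reduces to the case `L ≤ 2`, `q ≤ 108`. That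
case only concerns factors of bounded length, and these are found inside the words `f⁵(a)` extended
by a common continuation.
-/

/-! ### Occurrences of finite words -/

section Occurrences

variable {α : Type*} {s t : List α} {x : ℕ → α} {i k : ℕ}

theorem occursAt_singleton (x : ℕ → α) (n : ℕ) : OccursAt [x n] x n := by
  simp [OccursAt]

theorem occursAt_append :
    OccursAt (s ++ t) x i ↔ OccursAt s x i ∧ OccursAt t x (i + s.length) := by
  simp only [OccursAt, List.length_append, List.range_add, List.map_append, List.map_map]
  rw [List.append_eq_append_iff_of_size_eq_left (by simp)]
  simp only [Function.comp_def, add_assoc]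

theorem occursAt_cons {a : α} : OccursAt (a :: t) x i ↔ a = x i ∧ OccursAt t x (i + 1) := by
  rw [← List.singleton_append, occursAt_append]
  simp [OccursAt]

theorem OccursAt.take (h : OccursAt t x i) (n : ℕ) : OccursAt (t.take n) x i :=
  (occursAt_append.1 ((t.take_append_drop n).symm ▸ h)).1

theorem OccursAt.drop (h : OccursAt t x i) {n : ℕ} (hn : n ≤ t.length) :
    OccursAt (t.drop n) x (i + n) := by
  have h' := (occursAt_append.1 ((t.take_append_drop n).symm ▸ h)).2
  rwa [List.length_take_of_le hn] at h'

theorem OccursAt.getElem_eq (h : OccursAt t x i) (hk : k < t.length) : t[k] = x (i + k) := by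
  have h' : t[k]? = _ := congrArg (·[k]?) h
  simpa [hk] using h'

theorem occursAt_iff_getElem : OccursAt t x i ↔ ∀ k (hk : k < t.length), t[k] = x (i + k) :=
  ⟨fun h _ hk => h.getElem_eq hk, fun h => List.ext_getElem (by simp) (by simpa using h)⟩

end Occurrences

/-! ### Parikh vectors -/

section Parikh

variable {α : Type*} [DecidableEq α]

/-- The Parikh vector, modulo `m`, of the prefix of length `n` of the infinite word `x`. -/
def parikh (m : ℕ) (x : ℕ → α) (n : ℕ) : α → ZMod m :=
  ∑ k ∈ Finset.range n, Pi.single (x k) 1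

theorem parikh_succ (m : ℕ) (x : ℕ → α) (n : ℕ) :
    parikh m x (n + 1) = parikh m x n + Pi.single (x n) 1 :=
  Finset.sum_range_succ _ n

theorem OccursAt.parikh_add_length {t : List α} {x : ℕ → α} {i : ℕ} (h : OccursAt t x i) (m : ℕ) :
    parikh m x (i + t.length) = parikh m x i + fun a => (t.count a : ZMod m) := by
  induction t generalizing i with
  | nil => ext; simp
  | cons b t ih =>
    obtain ⟨rfl, ht⟩ := occursAt_cons.1 h
    ext a
    rw [List.length_cons, add_comm t.length, ← add_assoc, ih ht, parikh_succ]
    rcases eq_or_ne a (x i) with rfl | hne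
    · simp only [Pi.add_apply, Pi.single_eq_same, List.count_cons_self, Nat.cast_succ]
      ring
    · simp [hne, hne.symm]

end Parikh

theorem OccursAt.inKerPsi_iff {t : List A4} {x : ℕ → A4} {i : ℕ} (h : OccursAt t x i) :
    InKerPsi t ↔ parikh 4 x (i + t.length) = parikh 4 x i := by
  simp [h.parikh_add_length, InKerPsi, funext_iff, ZMod.natCast_eq_zero_iff]

/-! ### The morphism and its fixed point -/

/-- The second letter of `f(a)`. -/
def second (a : A4) : A4 := (fm a).getD 1 0

/-- The third letter of `f(a)`. -/
def third (a : A4) : A4 := (fm a).getD 2 0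

theorem fm_eq : ∀ a, fm a = [0, second a, third a] := by decide

theorem second_ne_zero : ∀ a, second a ≠ 0 := by decide

theorem eq_of_second_eq_of_third_eq : ∀ {a b}, second a = second b → third a = third b → a = b := by
  decide

theorem fw_cons (a : A4) (t : List A4) : fw (a :: t) = 0 :: second a :: third a :: fw t := by
  simp [fw, fm_eq]

theorem length_fw (t : List A4) : (fw t).length = 3 * t.length := by
  simp [fw, List.length_flatMap, fm_eq, mul_comm]

theorem length_fw_iterate (k : ℕ) (t : List A4) : (fw^[k] t).length = 3 ^ k * t.length := by
  induction k with
  | zero => simp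
  | succ k ih => rw [Function.iterate_succ_apply', length_fw, ih, pow_succ', mul_assoc]

theorem lt_length_fw_iterate_succ (n : ℕ) : n < (fw^[n + 1] [0]).length := by
  rw [length_fw_iterate, List.length_singleton, mul_one]
  exact (Nat.lt_pow_self (by norm_num)).trans (Nat.pow_lt_pow_succ (by norm_num))

/-- The morphism `f` extended to infinite words. -/
def imageWord (x : ℕ → A4) (n : ℕ) : A4 := (fm (x (n / 3))).getD (n % 3) 0

section Image

variable (x : ℕ → A4) (n : ℕ)

theorem imageWord_three_mul : imageWord x (3 * n) = 0 := by
  simp [imageWord, fm_eq]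

theorem imageWord_three_mul_add_one : imageWord x (3 * n + 1) = second (x n) := by
  simp [imageWord, second, Nat.mul_add_div]

theorem imageWord_three_mul_add_two : imageWord x (3 * n + 2) = third (x n) := by
  simp [imageWord, third, Nat.mul_add_div]

end Image

theorem OccursAt.fw_imageWord {t : List A4} {x : ℕ → A4} {i : ℕ} (h : OccursAt t x i) :
    OccursAt (fw t) (imageWord x) (3 * i) := by
  induction t generalizing i with
  | nil => rfl
  | cons a t ih =>
    obtain ⟨rfl, ht⟩ := occursAt_cons.1 h
    simp only [fw_cons, occursAt_cons, imageWord_three_mul, imageWord_three_mul_add_one,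
      imageWord_three_mul_add_two, true_and]
    exact ih ht

theorem fw_iterate_prefix {k l : ℕ} (h : k ≤ l) : fw^[k] [0] <+: fw^[l] [0] := by
  obtain ⟨d, rfl⟩ := Nat.exists_eq_add_of_le h
  have hd : [0] <+: fw^[d] [0] := by
    induction d with
    | zero => exact List.prefix_rfl
    | succ d ih =>
      obtain ⟨t, ht⟩ := ih (by omega)
      rw [Function.iterate_succ_apply', ← ht, List.singleton_append, fw_cons]
      exact ⟨_, rfl⟩
  clear h
  induction k with
  | zero => simpa using hd
  | succ k ih =>
    rw [Nat.add_right_comm, Function.iterate_succ_apply', Function.iterate_succ_apply']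
    exact ih.flatMap fm

theorem occursAt_fw_iterate_zero (k : ℕ) : OccursAt (fw^[k] [0]) w 0 := by
  refine occursAt_iff_getElem.2 fun n hn => ?_
  have hn' := lt_length_fw_iterate_succ n
  rw [zero_add, w, List.getD_eq_getElem _ _ hn']
  rcases le_total k (n + 1) with h | h
  · exact (fw_iterate_prefix h).getElem hn
  · exact ((fw_iterate_prefix h).getElem hn').symm

theorem imageWord_w : imageWord w = w := by
  ext1 n
  have hn := lt_length_fw_iterate_succ n
  have him : OccursAt (fw^[n + 1] [0]) (imageWord w) 0 := by
    rw [Function.iterate_succ_apply']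
    exact (occursAt_fw_iterate_zero n).fw_imageWord
  simpa using (him.getElem_eq hn).symm.trans ((occursAt_fw_iterate_zero (n + 1)).getElem_eq hn)

theorem w_three_mul (n : ℕ) : w (3 * n) = 0 := imageWord_w ▸ imageWord_three_mul w n

theorem w_three_mul_add_one (n : ℕ) : w (3 * n + 1) = second (w n) := by
  conv_lhs => rw [← imageWord_w, imageWord_three_mul_add_one]

theorem w_three_mul_add_two (n : ℕ) : w (3 * n + 2) = third (w n) := by
  conv_lhs => rw [← imageWord_w, imageWord_three_mul_add_two]

theorem w_eq_zero_of_mod_three {n : ℕ} (h : n % 3 = 0) : w n = 0 := by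
  rw [← Nat.div_add_mod n 3, h, add_zero, w_three_mul]

theorem w_ne_zero_of_mod_three {n : ℕ} (h : n % 3 = 1) : w n ≠ 0 := by
  rw [← Nat.div_add_mod n 3, h, w_three_mul_add_one]
  exact second_ne_zero _

theorem OccursAt.fw_iterate {t : List A4} {i : ℕ} (h : OccursAt t w i) (k : ℕ) :
    OccursAt (fw^[k] t) w (3 ^ k * i) := by
  induction k with
  | zero => simpa using h
  | succ k ih =>
    rw [Function.iterate_succ_apply', pow_succ', mul_assoc]
    exact imageWord_w ▸ ih.fw_imageWord

/-- The incidence matrix of `f` modulo `m`: column `b` is the Parikh vector of `f(b)`. -/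
def incidence (m : ℕ) : Matrix A4 A4 (ZMod m) :=
  Matrix.of fun a b => ((fm b).count a : ZMod m)

open Matrix in
theorem parikh_imageWord (m : ℕ) (x : ℕ → A4) (n : ℕ) :
    parikh m (imageWord x) (3 * n) = incidence m *ᵥ parikh m x n := by
  induction n with
  | zero => simp [parikh]
  | succ n ih =>
    have hocc : OccursAt (fm (x n)) (imageWord x) (3 * n) := by
      simpa [fw] using (occursAt_singleton x n).fw_imageWord
    have hstep := hocc.parikh_add_length m
    rw [show (fm (x n)).length = 3 by simp [fm_eq]] at hstep
    rw [mul_add_one, hstep, ih, parikh_succ, mulVec_add, mulVec_single_one]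
    rfl

theorem incidence_four_mulVec_injective : Function.Injective (incidence 4).mulVec := by
  refine Matrix.mulVec_injective_of_isUnit ((Matrix.isUnit_iff_isUnit_det _).2 ?_)
  have hdet : (incidence 4).det = 3 := by decide
  rw [hdet]
  decide

/-! ### Kernel repetitions and desubstitution -/

/-- The factor of length `q + L` at position `i` of the infinite word `x` has the kernel period
`q`. Splitting off the length `L` of the overlap avoids truncated subtraction. -/
structure IsKernelRep (x : ℕ → A4) (i q L : ℕ) : Prop where
  pos : 0 < q
  parikh_eq : parikh 4 x (i + q) = parikh 4 x i
  apply_eq : ∀ k < L, x (i + k) = x (i + k + q)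

theorem KernelPeriod.isKernelRep {v : List A4} {q : ℕ} {x : ℕ → A4} {i : ℕ}
    (h : KernelPeriod v q) (hv : OccursAt v x i) : IsKernelRep x i q (v.length - q) := by
  obtain ⟨hq, ⟨hpos, hper⟩, hker⟩ := h
  refine ⟨hpos, ?_, fun k hk => ?_⟩
  · simpa [hq] using (hv.take q).inKerPsi_iff.1 hker
  · have hkq : k + q < v.length := by omega
    rw [← hv.getElem_eq (by omega), add_assoc, ← hv.getElem_eq hkq]
    simpa [hkq, (Nat.le_add_right k q).trans_lt hkq] using hper k hkq

namespace IsKernelRep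

variable {x : ℕ → A4} {i q L : ℕ}

theorem apply_add_eq (h : IsKernelRep x i q L) {n : ℕ} (hi : i ≤ n) (hn : n < i + L) :
    x n = x (n + q) := by
  obtain ⟨k, rfl⟩ := Nat.exists_eq_add_of_le hi
  exact h.apply_eq k (by omega)

theorem extend_left (h : IsKernelRep x (i + 1) q L) (hi : x i = x (i + q)) :
    IsKernelRep x i q (L + 1) where
  pos := h.pos
  parikh_eq := by
    have hpar := h.parikh_eq
    rw [Nat.add_right_comm, parikh_succ, parikh_succ, ← hi] at hpar
    exact add_right_cancel hpar
  apply_eq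
    | 0, _ => hi
    | k + 1, hk => by simpa only [add_assoc, add_comm 1 k] using h.apply_eq k (by omega)

theorem tail (h : IsKernelRep x i q (L + 1)) : IsKernelRep x (i + 1) q L where
  pos := h.pos
  parikh_eq := by
    have hi : x i = x (i + q) := h.apply_eq 0 L.succ_pos
    rw [Nat.add_right_comm, parikh_succ, parikh_succ, h.parikh_eq, hi]
  apply_eq k hk := by simpa only [add_assoc, add_comm 1 k] using h.apply_eq (k + 1) (by omega)

theorem of_imageWord {m : ℕ} (h : IsKernelRep (imageWord x) (3 * m) (3 * q) L) :
    IsKernelRep x m q (L / 3) where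
  pos := Nat.pos_of_mul_pos_left h.pos
  parikh_eq := by
    apply incidence_four_mulVec_injective
    rw [← parikh_imageWord, ← parikh_imageWord, mul_add, h.parikh_eq]
  apply_eq k hk := by
    have hblock (r : ℕ) (hr : r < 3) :
        imageWord x (3 * (m + k) + r) = imageWord x (3 * (m + k + q) + r) := by
      rw [mul_add 3 (m + k), add_right_comm]
      exact h.apply_add_eq (by omega) (by omega)
    apply eq_of_second_eq_of_third_eq
    · simpa only [imageWord_three_mul_add_one] using hblock 1 (by omega)
    · simpa only [imageWord_three_mul_add_two] using hblock 2 (by omega)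

theorem of_three_mul {m : ℕ} (h : IsKernelRep w (3 * m) (3 * q) L) : IsKernelRep w m q (L / 3) :=
  of_imageWord (imageWord_w.symm ▸ h)

theorem three_dvd (h : IsKernelRep w i q L) (hL : 3 ≤ L) : 3 ∣ q := by
  by_contra hq
  obtain hq | hq : q % 3 = 1 ∨ q % 3 = 2 := by omega
  · have heq := h.apply_add_eq (n := 3 * ((i + 2) / 3)) (by omega) (by omega)
    rw [w_three_mul] at heq
    exact w_ne_zero_of_mod_three (by omega) heq.symm
  · have heq := h.apply_add_eq (n := 3 * ((i + 1) / 3) + 1) (by omega) (by omega)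
    rw [w_eq_zero_of_mod_three (n := _ + q) (by omega)] at heq
    exact w_ne_zero_of_mod_three (by omega) heq

theorem exists_desubstitution (h : IsKernelRep w i q L) (hL : 3 ≤ L) :
    ∃ j q' L', q = 3 * q' ∧ L' < L ∧ IsKernelRep w j q' L' ∧
      (L ≤ 3 * L' + 2 ∨
        L ≤ 3 * L' + 3 ∧ ∃ m, j = m + 1 ∧ third (w m) = third (w (m + q'))) := by
  obtain ⟨q', rfl⟩ := h.three_dvd hL
  obtain ⟨m, hi | hi | hi⟩ : ∃ m, i = 3 * m ∨ i = 3 * m + 1 ∨ i = 3 * m + 2 :=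
    ⟨i / 3, by omega⟩ <;> subst hi
  · exact ⟨m, q', L / 3, rfl, by omega, h.of_three_mul, .inl (by omega)⟩
  · have hleft : w (3 * m) = w (3 * m + 3 * q') := by rw [← mul_add, w_three_mul, w_three_mul]
    exact ⟨m, q', (L + 1) / 3, rfl, by omega, (h.extend_left hleft).of_three_mul,
      .inl (by omega)⟩
  · obtain ⟨L, rfl⟩ := Nat.exists_eq_add_of_le' (show 1 ≤ L by omega)
    have htail : IsKernelRep w (3 * (m + 1)) (3 * q') L := h.tail
    have hthird := h.apply_add_eq le_rfl (by omega)
    rw [add_right_comm, ← mul_add, w_three_mul_add_two, w_three_mul_add_two] at hthird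
    exact ⟨m + 1, q', L / 3, rfl, by omega, htail.of_three_mul, .inr ⟨by omega, m, rfl, hthird⟩⟩

end IsKernelRep

/-! ### Repetitions with short overlap -/

/-- The word `f⁵(a)` followed by the prefix of length `121` common to the words `f⁵(b)`. It occurs
at position `243 n` of `w` whenever `a = w(n)`. -/
def block (a : A4) : List A4 := fw^[5] [a] ++ (fw^[5] [0]).take 121

theorem take_fw_iterate_five :
    ∀ a, (fw^[5] [a]).take 121 = (fw^[5] [0]).take 121 := by decide +kernel

theorem length_block (a : A4) : (block a).length = 364 := by
  simp [block, length_fw_iterate, -Function.iterate_succ]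

theorem occursAt_block (n : ℕ) : OccursAt (block (w n)) w (243 * n) := by
  refine occursAt_append.2 ⟨(occursAt_singleton w n).fw_iterate 5, ?_⟩
  rw [← take_fw_iterate_five (w (n + 1)), length_fw_iterate]
  exact ((occursAt_singleton w (n + 1)).fw_iterate 5).take 121

/-- The numbers of occurrences of the four letters in `u`, as the base-`256` digits of a single
natural number: the kernel evaluates arithmetic on these much faster than `List.count`. -/
def packedCount (u : List A4) : ℕ := (u.map fun a => 256 ^ a.val).sum

theorem packedCount_eq (u : List A4) :
    packedCount u = u.count 0 + 256 * u.count 1 + 256 ^ 2 * u.count 2 + 256 ^ 3 * u.count 3 := by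
  induction u with
  | nil => rfl
  | cons a u ih =>
    rw [packedCount, List.map_cons, List.sum_cons, ← packedCount, ih]
    fin_cases a <;> simp <;> ring

/-- The letter counts packed in `c` are all divisible by `4`. -/
def PackedInKer (c : ℕ) : Prop :=
  c % 4 = 0 ∧ c / 256 % 4 = 0 ∧ c / 256 ^ 2 % 4 = 0 ∧ c / 256 ^ 3 % 4 = 0

instance : DecidablePred PackedInKer := fun _ => inferInstanceAs (Decidable (_ ∧ _))

theorem InKerPsi.packedInKer {u : List A4} (h : InKerPsi u) (hu : u.length < 256) :
    PackedInKer (packedCount u) := by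
  have hcount (a : A4) : u.count a % 4 = 0 ∧ u.count a < 256 :=
    ⟨Nat.mod_eq_zero_of_dvd (h a), List.count_le_length.trans_lt hu⟩
  have hpacked := packedCount_eq u
  have := hcount 0
  have := hcount 1
  have := hcount 2
  have := hcount 3
  unfold PackedInKer
  omega

/-- Given the packed letter counts `c` and the length `n` of a word `s`, the lengths of the
prefixes of `s ++ u` that are longer than `s` and lie in `ker ψ`. -/
def kernelPrefixLengthsAux (c n : ℕ) : List A4 → List ℕ
  | [] => []
  | a :: u =>
    if PackedInKer (c + 256 ^ a.val) then
      (n + 1) :: kernelPrefixLengthsAux (c + 256 ^ a.val) (n + 1) u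
    else kernelPrefixLengthsAux (c + 256 ^ a.val) (n + 1) u

/-- The lengths of the nonempty prefixes of `u` in `ker ψ`. The word `u` should be shorter than
`256`, since otherwise the packed counts may overflow. -/
def kernelPrefixLengths (u : List A4) : List ℕ := kernelPrefixLengthsAux 0 0 u

theorem InKerPsi.length_append_mem_kernelPrefixLengthsAux {s t u : List A4}
    (h : InKerPsi (s ++ t)) (ht : t <+: u) (hne : t ≠ []) (hlen : (s ++ t).length < 256) :
    (s ++ t).length ∈ kernelPrefixLengthsAux (packedCount s) s.length u := by
  induction u generalizing s t with
  | nil => exact absurd (List.prefix_nil.1 ht) hne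
  | cons a u ih =>
    obtain rfl | ⟨t, rfl, htu⟩ := List.prefix_cons_iff.1 ht
    · exact absurd rfl hne
    have hc : packedCount s + 256 ^ a.val = packedCount (s ++ [a]) := by simp [packedCount]
    have hl : s.length + 1 = (s ++ [a]).length := by simp
    rw [List.append_cons] at h hlen ⊢
    rw [kernelPrefixLengthsAux, hc, hl]
    rcases eq_or_ne t [] with rfl | htne
    · rw [List.append_nil] at h hlen ⊢
      rw [if_pos (h.packedInKer hlen)]
      exact List.mem_cons_self
    · have hmem := ih h htu htne hlen
      split_ifs
      · exact List.mem_cons_of_mem _ hmem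
      · exact hmem

theorem InKerPsi.length_mem_kernelPrefixLengths {t u : List A4} (h : InKerPsi t) (ht : t <+: u)
    (hne : t ≠ []) (hlen : t.length < 256) : t.length ∈ kernelPrefixLengths u :=
  InKerPsi.length_append_mem_kernelPrefixLengthsAux (s := []) h ht hne hlen

/-- If `t` occurs at a position of `w` and is preceded by the letter `a`, every kernel repetition
at that position with period `q ≤ 108` and overlap `L < 3` obeys the bounds of
`IsKernelRep.lt_period`. -/
def IsGoodWindow (a : A4) (t : List A4) : Prop :=
  ∀ q ∈ kernelPrefixLengths (t.take 108), ∀ L < 3, t.take L = (t.drop q).take L →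
    31 * L + 36 < q ∧ (third a = third (t.getD (q - 1) 0) → 31 * L + 46 < q)

instance (a : A4) (t : List A4) : Decidable (IsGoodWindow a t) :=
  inferInstanceAs (Decidable (∀ _ ∈ _, _))

theorem isGoodWindow_block_zero : IsGoodWindow 0 (block 0) := by decide +kernel

set_option maxRecDepth 100000 in
theorem isGoodWindow_drop_block :
    ∀ a, ∀ r < 243, IsGoodWindow ((block a).getD r 0) ((block a).drop (r + 1)) := by
  decide +kernel

theorem IsGoodWindow.lt_period {a : A4} {t : List A4} {i q L : ℕ} (hgood : IsGoodWindow a t)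
    (ht : OccursAt t w i) (hlen : 110 ≤ t.length) (h : IsKernelRep w i q L) (hL : L < 3) :
    31 * L + 36 < q ∧ (third a = third (w (i + (q - 1))) → 31 * L + 46 < q) := by
  obtain hq | hq := lt_or_ge 108 q
  · omega
  have hpos := h.pos
  have hlen_take : (t.take q).length = q := List.length_take_of_le (by omega)
  have hker : InKerPsi (t.take q) := by
    rw [(ht.take q).inKerPsi_iff, hlen_take]
    exact h.parikh_eq
  have hmem : q ∈ kernelPrefixLengths (t.take 108) := by
    have hmem' := hker.length_mem_kernelPrefixLengths (List.take_prefix_take_left hq)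
      (List.ne_nil_of_length_pos (by omega)) (by omega)
    rwa [hlen_take] at hmem'
  have hoverlap : t.take L = (t.drop q).take L := by
    refine List.ext_getElem (by simp; omega) fun k hk _ => ?_
    have hkL : k < L := hk.trans_le (List.length_take_le L t)
    rw [List.getElem_take, List.getElem_take, List.getElem_drop, ht.getElem_eq, ht.getElem_eq,
      h.apply_eq k hkL, add_assoc, add_comm q]
  have hbefore : t.getD (q - 1) 0 = w (i + (q - 1)) := by
    rw [List.getD_eq_getElem _ _ (by omega), ht.getElem_eq]
  rw [← hbefore]
  exact hgood q hmem L hL hoverlap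

theorem IsKernelRep.lt_period_of_lt_three {i q L : ℕ} (h : IsKernelRep w i q L) (hL : L < 3) :
    31 * L + 36 < q ∧ ∀ m, i = m + 1 → third (w m) = third (w (m + q)) → 31 * L + 46 < q := by
  have hpos := h.pos
  rcases i with - | m
  · have hocc : OccursAt (block 0) w 0 := occursAt_block 0
    have hbound := isGoodWindow_block_zero.lt_period hocc (by simp [length_block]) h hL
    exact ⟨hbound.1, fun m hm => absurd hm m.succ_ne_zero.symm⟩
  · have hblock := occursAt_block (m / 243)
    have hr : m % 243 < 243 := Nat.mod_lt _ (by norm_num)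
    have hocc := hblock.drop (n := m % 243 + 1) (by rw [length_block]; omega)
    rw [← add_assoc, Nat.div_add_mod] at hocc
    have hbefore : (block (w (m / 243))).getD (m % 243) 0 = w m := by
      rw [List.getD_eq_getElem _ _ (by rw [length_block]; omega), hblock.getElem_eq,
        Nat.div_add_mod]
    have hbound := (isGoodWindow_drop_block _ _ hr).lt_period hocc
      (by rw [List.length_drop, length_block]; omega) h hL
    rw [hbefore, add_assoc, Nat.add_sub_cancel' hpos] at hbound
    exact ⟨hbound.1, by rintro _ ⟨⟩; exact hbound.2⟩

/- The bounds are stable under desubstitution: `3 (31 L' + 37) = 31 (3 L' + 2) + 49`, so the first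
bound suffices while `L ≤ 3 L' + 2`. The second one is needed exactly when `L = 3 L' + 3`, where
`3 (31 L' + 47) = 31 (3 L' + 3) + 48`. -/
theorem IsKernelRep.lt_period {i q L : ℕ} (h : IsKernelRep w i q L) :
    31 * L + 36 < q ∧ ∀ m, i = m + 1 → third (w m) = third (w (m + q)) → 31 * L + 46 < q := by
  induction L using Nat.strong_induction_on generalizing i q with
  | _ L ih =>
    obtain hL | hL := lt_or_ge L 3
    · exact h.lt_period_of_lt_three hL
    suffices hstrong : 31 * L + 46 < q from ⟨by omega, fun _ _ _ => hstrong⟩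
    obtain ⟨j, q', L', rfl, hlt, hrep, hL' | ⟨hL', m, hj, hthird⟩⟩ := h.exists_desubstitution hL
    · have hbound := (ih L' hlt hrep).1
      omega
    · have hbound := (ih L' hlt hrep).2 m hj hthird
      omega

theorem stmt2_general (n : ℤ) (hn : n ≤ 32) :
    ¬ ∃ (v : List A4) (q : ℕ), FactorOf v w ∧ KernelPeriod v q ∧
      (n - 1) * (v.length + 1) ≥ n * q - 3 := by
  rintro ⟨v, q, ⟨i, hv⟩, hq, hlong⟩
  obtain ⟨L, hL⟩ := Nat.exists_eq_add_of_le hq.1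
  have hrep : IsKernelRep w i q L := by simpa [hL] using hq.isKernelRep hv
  have hperiod : (31 * L + 36 : ℤ) < q := by exact_mod_cast hrep.lt_period.1
  have hmono : (n - 1) * (L + 1 : ℤ) ≤ 31 * (L + 1) := by gcongr; omega
  rw [hL] at hlong
  push_cast at hlong
  linarith

/-- For `n ∈ {30, 31, 32}`, `w` contains no ψ-kernel repetition for `n`: no factor `v` of `w`
has a kernel period `q` with `(n-1)(|v|+1) ≥ nq - 3`. -/
theorem stmt2 (n : ℕ) (hn : n = 30 ∨ n = 31 ∨ n = 32) :
    ¬ ∃ (v : List A4) (q : ℕ), FactorOf v w ∧ KernelPeriod v q ∧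
      ((n : ℤ) - 1) * (v.length + 1) ≥ (n : ℤ) * q - 3 :=
  stmt2_general n (by omega)
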